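/- arXiv:1111.0431 — 4 statements merged into one kernel-verified Lean document; each statement's English description precedes it below -/
import Mathlib

section
/- If r ∈ ℝ is not an integer, then for every continuous 1-periodic function g : ℝ → ℂ there exists a differentiable 1-periodic function y : ℝ → ℂ such that y′(θ) − 2π√(−1) r y(θ) = g(θ) for all θ ∈ ℝ. -/
/-!
Put `a = 2πir`. The average `y(θ) = (e^{-a} - 1)⁻¹ ∫₀¹ e^{-au} g(θ + u) du` is visibly 1-periodic.
The substitution `s = θ + u` turns the integral into `e^{aθ} ∫_θ^{θ+1} e^{-as} g(s) ds`; by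
periodicity of `g` the two endpoints contribute `(e^{-a} - 1) g(θ)` to its derivative, so
`y' = a y + g`. The monodromy `e^a` differs from `1` exactly because `r` is not an integer.
-/

theorem hasDerivAt_integral_add_const {F : Type*} [NormedAddCommGroup F] [NormedSpace ℝ F]
    [CompleteSpace F] {f : ℝ → F} (hf : Continuous f) (T t : ℝ) :
    HasDerivAt (fun x ↦ ∫ s in x..x + T, f s) (f (t + T) - f t) t := by
  have hprimitive (x : ℝ) : HasDerivAt (fun x ↦ ∫ s in (0 : ℝ)..x, f s) (f x) x :=
    (hf.integral_hasStrictDerivAt 0 x).hasDerivAt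
  have hwindow : (fun x ↦ ∫ s in x..x + T, f s) =
      fun x ↦ (∫ s in (0 : ℝ)..x + T, f s) - ∫ s in (0 : ℝ)..x, f s := by
    funext x
    exact (intervalIntegral.integral_interval_sub_left
      (hf.intervalIntegrable _ _) (hf.intervalIntegrable _ _)).symm
  rw [hwindow]
  exact ((hprimitive (t + T)).comp_add_const t T).sub (hprimitive t)

section TwistedPeriodIntegral

variable {E : Type*} [NormedAddCommGroup E] [NormedSpace ℂ E]

/-- The integral of `g` over the window `[t, t + T]` against the exponential weight
`e^{-a(s - t)}`. When `e^{aT} ≠ 1`, dividing it by `e^{-aT} - 1` gives the inverse of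
`y ↦ y' - a y` on `T`-periodic functions. The integral is written over the fixed interval
`[0, T]`, so that periodicity in `t` is inherited from `g`. -/
noncomputable def twistedPeriodIntegral (a : ℂ) (T : ℝ) (g : ℝ → E) (t : ℝ) : E :=
  ∫ u in (0 : ℝ)..T, Complex.exp (-(a * u)) • g (t + u)

theorem twistedPeriodIntegral_periodic (a : ℂ) {T : ℝ} {g : ℝ → E} (hg : Function.Periodic g T) :
    Function.Periodic (twistedPeriodIntegral a T g) T := by
  intro t
  simp only [twistedPeriodIntegral, add_right_comm t T, hg _]

theorem twistedPeriodIntegral_eq_exp_smul_integral (a : ℂ) (T : ℝ) (g : ℝ → E) (t : ℝ) :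
    twistedPeriodIntegral a T g t =
      Complex.exp (a * t) • ∫ s in t..t + T, Complex.exp (-(a * s)) • g s := by
  have weight_shift (u : ℝ) : Complex.exp (a * t) * Complex.exp (-(a * (t + u : ℝ))) =
      Complex.exp (-(a * u)) := by
    rw [← Complex.exp_add]
    push_cast
    ring_nf
  calc twistedPeriodIntegral a T g t
      = ∫ u in (0 : ℝ)..T,
          Complex.exp (a * t) • Complex.exp (-(a * (t + u : ℝ))) • g (t + u) := by
        simp only [twistedPeriodIntegral, smul_smul, weight_shift]
    _ = Complex.exp (a * t) • ∫ s in t..t + T, Complex.exp (-(a * s)) • g s := by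
        rw [intervalIntegral.integral_smul, intervalIntegral.integral_comp_add_left
          (fun s : ℝ ↦ Complex.exp (-(a * s)) • g s), add_zero]

theorem hasDerivAt_twistedPeriodIntegral [CompleteSpace E] (a : ℂ) {T : ℝ} {g : ℝ → E}
    (hg : Continuous g) (hper : Function.Periodic g T) (t : ℝ) :
    HasDerivAt (twistedPeriodIntegral a T g)
      (a • twistedPeriodIntegral a T g t + (Complex.exp (-(a * T)) - 1) • g t) t := by
  have hexp : HasDerivAt (fun x : ℝ ↦ Complex.exp (a * x)) (Complex.exp (a * t) * a) t := by
    simpa using (Complex.ofRealCLM.hasDerivAt.const_mul a).cexp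
  have hintegral := hasDerivAt_integral_add_const
    (f := fun s : ℝ ↦ Complex.exp (-(a * s)) • g s) (by fun_prop) T t
  have endpoint_upper : Complex.exp (a * t) * Complex.exp (-(a * (t + T : ℝ))) =
      Complex.exp (-(a * T)) := by
    rw [← Complex.exp_add]
    push_cast
    ring_nf
  have endpoint_lower : Complex.exp (a * t) * Complex.exp (-(a * t)) = 1 := by
    rw [← Complex.exp_add, add_neg_cancel, Complex.exp_zero]
  rw [funext (twistedPeriodIntegral_eq_exp_smul_integral a T g)]
  refine (hexp.smul hintegral).congr_deriv ?_
  rw [hper t, smul_sub, smul_smul, smul_smul, endpoint_upper, endpoint_lower, ← sub_smul,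
    mul_comm _ a, mul_smul, add_comm]

theorem twisted_deRham_surjective_of_not_integer_general [CompleteSpace E] {a : ℂ} {T : ℝ}
    (hmonodromy : Complex.exp (a * T) ≠ 1) {g : ℝ → E} (hg : Continuous g)
    (hper : Function.Periodic g T) :
    ∃ y : ℝ → E, Differentiable ℝ y ∧ Function.Periodic y T ∧
      ∀ t : ℝ, deriv y t - a • y t = g t := by
  have hfactor : Complex.exp (-(a * T)) - 1 ≠ 0 := by
    rwa [sub_ne_zero, Complex.exp_neg, ne_eq, inv_eq_one]
  set c := Complex.exp (-(a * T)) - 1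
  let y : ℝ → E := c⁻¹ • twistedPeriodIntegral a T g
  have hderiv (t : ℝ) : HasDerivAt y (a • y t + g t) t := by
    refine ((hasDerivAt_twistedPeriodIntegral a hg hper t).const_smul c⁻¹).congr_deriv ?_
    rw [smul_add, smul_comm, inv_smul_smul₀ hfactor]
    rfl
  refine ⟨y, fun t ↦ (hderiv t).differentiableAt,
    (twistedPeriodIntegral_periodic a hper).smul c⁻¹, fun t ↦ ?_⟩
  rw [(hderiv t).deriv, add_sub_cancel_left]

end TwistedPeriodIntegral

theorem exp_two_pi_I_mul_eq_one_iff {z : ℂ} :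
    Complex.exp (2 * Real.pi * Complex.I * z) = 1 ↔ ∃ n : ℤ, z = n := by
  simp only [Complex.exp_eq_one_iff, mul_comm (2 * Real.pi * Complex.I : ℂ) z,
    mul_left_inj' Complex.two_pi_I_ne_zero]

/-- If `r` is not an integer, then for every continuous 1-periodic
`g : ℝ → ℂ` there is a differentiable 1-periodic `y : ℝ → ℂ` with
`y′(θ) − 2π√(−1) r y(θ) = g(θ)` for all `θ`. -/
theorem twisted_deRham_surjective_of_not_integer (r : ℝ) (hr : ¬∃ n : ℤ, r = n)
    (g : ℝ → ℂ) (hg : Continuous g) (hgper : ∀ θ : ℝ, g (θ + 1) = g θ) :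
    ∃ y : ℝ → ℂ, Differentiable ℝ y ∧ (∀ θ : ℝ, y (θ + 1) = y θ) ∧
      ∀ θ : ℝ, deriv y θ - 2 * (Real.pi : ℂ) * Complex.I * (r : ℂ) * y θ = g θ := by
  refine twisted_deRham_surjective_of_not_integer_general ?_ hg hgper
  rw [Complex.ofReal_one, mul_one, ne_eq, exp_two_pi_I_mul_eq_one_iff]
  exact_mod_cast hr
end

section
/- If r ∈ ℤ, then there is no differentiable 1-periodic function y : ℝ → ℂ satisfying y′(θ) − 2π√(−1) r y(θ) = exp(2π√(−1) r θ) for all θ ∈ ℝ. -/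
/-!
Multiplication by the integrating factor `exp (-c θ)` turns the operator `y ↦ y' - c y` into
`d/dθ`. When `exp (c T) = 1`, this factor descends to `ℝ / Tℤ`, so the integral of
`exp (-c θ) • f θ` over a period vanishes for every `f` in the range of the operator. For
`f θ = exp (c θ)` this integral is instead the length of the period.
-/

section IntegratingFactor

variable {E : Type*} [NormedAddCommGroup E] [NormedSpace ℂ E]

theorem hasDerivAt_exp_neg_mul_smul (c : ℂ) {y : ℝ → E} {y' : E} {θ : ℝ}
    (hy : HasDerivAt y y' θ) :
    HasDerivAt (fun t : ℝ => Complex.exp (-c * t) • y t)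
      (Complex.exp (-c * θ) • (y' - c • y θ)) θ := by
  have hexp : HasDerivAt (fun t : ℝ => Complex.exp (-c * t)) (Complex.exp (-c * θ) * -c) θ := by
    simpa using ((hasDerivAt_id (θ : ℂ)).const_mul (-c)).cexp.comp_ofReal
  refine (hexp.smul hy).congr_deriv ?_
  module

variable [CompleteSpace E]

theorem integral_exp_neg_mul_smul_deriv_sub_smul (c : ℂ) {y y' : ℝ → E} {a b : ℝ}
    (hy : ∀ θ ∈ Set.uIcc a b, HasDerivAt y (y' θ) θ)
    (hint : IntervalIntegrable (fun θ : ℝ => Complex.exp (-c * θ) • (y' θ - c • y θ))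
      MeasureTheory.volume a b) :
    ∫ θ in a..b, Complex.exp (-c * θ) • (y' θ - c • y θ)
      = Complex.exp (-c * b) • y b - Complex.exp (-c * a) • y a :=
  intervalIntegral.integral_eq_sub_of_hasDerivAt
    (fun θ hθ => hasDerivAt_exp_neg_mul_smul c (hy θ hθ)) hint

theorem twisted_deRham_not_surjective_of_integer_general {c : ℂ} {T : ℝ}
    (hc : Complex.exp (c * T) = 1) {f : ℝ → E}
    (hf : ∫ θ in 0..T, Complex.exp (-c * θ) • f θ ≠ 0) :
    ¬∃ y : ℝ → E, Differentiable ℝ y ∧ y T = y 0 ∧ ∀ θ : ℝ, deriv y θ - c • y θ = f θ := by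
  rintro ⟨y, hy, hyT, hyf⟩
  obtain rfl : (fun θ => deriv y θ - c • y θ) = f := funext hyf
  have hint := intervalIntegral.intervalIntegrable_of_integral_ne_zero hf
  have hexp : Complex.exp (-c * T) = 1 := by rw [neg_mul, Complex.exp_neg, hc, inv_one]
  apply hf
  rw [integral_exp_neg_mul_smul_deriv_sub_smul c (fun θ _ => (hy θ).hasDerivAt) hint, hexp, hyT]
  simp

end IntegratingFactor

theorem integral_exp_neg_mul_smul_exp_mul (c : ℂ) (a b : ℝ) :
    ∫ θ in a..b, Complex.exp (-c * θ) • Complex.exp (c * θ) = b - a := by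
  simp [← Complex.exp_add]

theorem exp_two_pi_mul_I_mul_int (n : ℤ) :
    Complex.exp (2 * Real.pi * Complex.I * n) = 1 := by
  rw [mul_comm, Complex.exp_int_mul_two_pi_mul_I]

/-- If `r` is an integer `n`, there is no differentiable 1-periodic
`y : ℝ → ℂ` with `y′(θ) − 2π√(−1) n y(θ) = exp (2π√(−1) n θ)` for all `θ`. -/
theorem twisted_deRham_not_surjective_of_integer (n : ℤ) :
    ¬∃ y : ℝ → ℂ, Differentiable ℝ y ∧ (∀ θ : ℝ, y (θ + 1) = y θ) ∧
      ∀ θ : ℝ, deriv y θ - 2 * (Real.pi : ℂ) * Complex.I * (n : ℂ) * y θ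
        = Complex.exp (2 * (Real.pi : ℂ) * Complex.I * (n : ℂ) * (θ : ℂ)) := by
  rintro ⟨y, hy, hper, hode⟩
  exact twisted_deRham_not_surjective_of_integer_general (T := 1)
    (by simpa using exp_two_pi_mul_I_mul_int n)
    (by rw [integral_exp_neg_mul_smul_exp_mul]; simp)
    ⟨y, hy, by simpa using hper 0, hode⟩
end

section
/- Let m, γ ∈ ℤ and r ∈ ℝ. There exists a differentiable function y : ℝ → ℂ with y(0) ≠ 0, satisfying y′(θ) = 2π√(−1) r y(θ) for all θ ∈ ℝ and exp(−2π√(−1) m φ)·y(θ+φ) = exp(2π√(−1) γ φ)·y(θ) for all θ, φ ∈ ℝ, if and only if r = m + γ. Moreover any such y is automatically 1-periodic. -/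
/-!
The weight condition says `y (θ + φ) = exp (2πi (m + γ) φ) * y θ`. Differentiating in `φ` at `0`
shows that `y` is parallel for the parameter `m + γ`, and a nonvanishing `y` is parallel for at
most one parameter.
-/

open Complex
open scoped Real

/-- `HasWeight m γ y` says that rotation by `φ`, lifted to sections of the trivial line bundle over
the circle with fiber weight shift `m`, multiplies `y` by `exp (2πi γ φ)`. Sections are functions of
the angle on `ℝ`, not assumed periodic, so the weights may be arbitrary complex numbers. -/
def HasWeight (m γ : ℂ) (y : ℝ → ℂ) : Prop :=
  ∀ θ φ : ℝ, exp (-(2 * π * I * m * φ)) * y (θ + φ) = exp (2 * π * I * γ * φ) * y θ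

theorem hasDerivAt_of_apply_add_eq_exp_smul {E : Type*} [NormedAddCommGroup E] [NormedSpace ℂ E]
    {c : ℂ} {y : ℝ → E} (h : ∀ θ φ : ℝ, y (θ + φ) = exp (c * φ) • y θ) (θ : ℝ) :
    HasDerivAt y (c • y θ) θ := by
  have hexp : HasDerivAt (fun φ : ℝ => exp (c * φ)) c 0 := by
    simpa using (((hasDerivAt_id (0 : ℂ)).const_mul c).cexp).comp_ofReal
  have htranslate : HasDerivAt (fun φ : ℝ => y (θ + φ)) (c • y θ) (θ - θ) := by
    simpa only [h, sub_self] using hexp.smul_const (y θ)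
  simpa using htranslate.comp_sub_const θ θ

theorem hasWeight_iff_apply_add {m γ : ℂ} {y : ℝ → ℂ} :
    HasWeight m γ y ↔ ∀ θ φ : ℝ, y (θ + φ) = exp (2 * π * I * (m + γ) * φ) * y θ := by
  refine forall₂_congr fun θ φ => ?_
  rw [Complex.exp_neg, inv_mul_eq_iff_eq_mul₀ (exp_ne_zero _), ← mul_assoc, ← Complex.exp_add,
    mul_add, add_mul]

theorem hasWeight_exp (m γ : ℂ) : HasWeight m γ fun θ => exp (2 * π * I * (m + γ) * θ) := by
  refine hasWeight_iff_apply_add.2 fun θ φ => ?_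
  rw [ofReal_add, mul_add, add_comm, Complex.exp_add]

namespace HasWeight

variable {m γ : ℂ} {y : ℝ → ℂ}

theorem hasDerivAt (hy : HasWeight m γ y) (θ : ℝ) :
    HasDerivAt y (2 * π * I * (m + γ) * y θ) θ :=
  hasDerivAt_of_apply_add_eq_exp_smul (hasWeight_iff_apply_add.1 hy) θ

theorem deriv_eq_iff (hy : HasWeight m γ y) {r : ℂ} {θ : ℝ} (hθ : y θ ≠ 0) :
    deriv y θ = 2 * π * I * r * y θ ↔ r = m + γ := by
  rw [(hy.hasDerivAt θ).deriv, mul_left_inj' hθ, mul_right_inj' two_pi_I_ne_zero, eq_comm]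

theorem periodic_one (hy : HasWeight m γ y) {n : ℤ} (hn : m + γ = n) : Function.Periodic y 1 := by
  intro θ
  have hexp : exp (2 * π * I * (m + γ) * (1 : ℝ)) = 1 :=
    exp_eq_one_iff.2 ⟨n, by rw [hn, ofReal_one]; ring⟩
  rw [hasWeight_iff_apply_add.1 hy θ 1, hexp, one_mul]

end HasWeight

theorem weight_section_exists_iff_general (m γ r : ℂ) :
    ((∃ y : ℝ → ℂ, Differentiable ℝ y ∧ y 0 ≠ 0 ∧
        (∀ θ : ℝ, deriv y θ = 2 * π * I * r * y θ) ∧ HasWeight m γ y) ↔ r = m + γ) ∧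
      ∀ y : ℝ → ℂ, HasWeight m γ y → ∀ n : ℤ, m + γ = n → Function.Periodic y 1 := by
  refine ⟨⟨?_, ?_⟩, fun y hy n hn => hy.periodic_one hn⟩
  · rintro ⟨y, -, hy₀, hparallel, hweight⟩
    exact (hweight.deriv_eq_iff hy₀).1 (hparallel 0)
  · intro hr
    have hweight := hasWeight_exp m γ
    exact ⟨_, fun θ => (hweight.hasDerivAt θ).differentiableAt, exp_ne_zero _,
      fun θ => (hweight.deriv_eq_iff (exp_ne_zero _)).2 hr, hweight⟩

/-- For `m, γ ∈ ℤ` and `r ∈ ℝ`, a differentiable `y : ℝ → ℂ` with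
`y 0 ≠ 0`, `y′(θ) = 2π√(−1) r y(θ)`, and
`exp(−2π√(−1) m φ)·y(θ+φ) = exp(2π√(−1) γ φ)·y(θ)` for all `θ, φ`, exists iff
`r = m + γ`; moreover any such `y` is automatically 1-periodic. -/
theorem weight_section_exists_iff (m γ : ℤ) (r : ℝ) :
    ((∃ y : ℝ → ℂ, Differentiable ℝ y ∧ y 0 ≠ 0 ∧
        (∀ θ : ℝ, deriv y θ = 2 * (Real.pi : ℂ) * Complex.I * (r : ℂ) * y θ) ∧
        (∀ θ φ : ℝ, Complex.exp (-(2 * (Real.pi : ℂ) * Complex.I * (m : ℂ) * (φ : ℂ)))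
            * y (θ + φ)
          = Complex.exp (2 * (Real.pi : ℂ) * Complex.I * (γ : ℂ) * (φ : ℂ)) * y θ))
      ↔ r = (m : ℝ) + (γ : ℝ))
    ∧
    (∀ y : ℝ → ℂ, Differentiable ℝ y → y 0 ≠ 0 →
      (∀ θ : ℝ, deriv y θ = 2 * (Real.pi : ℂ) * Complex.I * (r : ℂ) * y θ) →
      (∀ θ φ : ℝ, Complex.exp (-(2 * (Real.pi : ℂ) * Complex.I * (m : ℂ) * (φ : ℂ)))
          * y (θ + φ)
        = Complex.exp (2 * (Real.pi : ℂ) * Complex.I * (γ : ℂ) * (φ : ℂ)) * y θ) →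
      ∀ θ : ℝ, y (θ + 1) = y θ) := by
  have hgeneral := weight_section_exists_iff_general m γ r
  exact ⟨hgeneral.1.trans (by norm_cast),
    fun y _ _ _ hweight => hgeneral.2 y hweight (m + γ) (Int.cast_add m γ).symm⟩
end

section
/- Let z = (z₀, z₁) and w = (w₀, w₁) be nonzero vectors in ℂ². There exists a complex number h with |h| = 1 such that the projective points satisfy [w₀ : w₁] = [z₀ : h z₁] if and only if |z₁|²·(|w₀|² + |w₁|²) = |w₁|²·(|z₀|² + |z₁|²). -/
open scoped LinearAlgebra.Projectivization

/-!
If `[w₀ : w₁] = [z₀ : h z₁]` with scaling factor `t`, then `t z₀ = w₀`, and all that a rotation `h`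
imposes on `z₁` is that `t z₁` and `w₁` have the same norm. Such a `t` exists iff
`‖z₁‖ ‖w₀‖ = ‖w₁‖ ‖z₀‖`, and adding `‖z₁‖² ‖w₁‖²` to both sides of the square of this equation
gives the invariant.
-/

theorem mul_eq_mul_iff_sq_mul_add_sq_eq {R : Type*} [CommRing R] [LinearOrder R]
    [IsStrictOrderedRing R] {a b c d : R} (ha : 0 ≤ a) (hb : 0 ≤ b) (hc : 0 ≤ c) (hd : 0 ≤ d) :
    b * c = d * a ↔ b ^ 2 * (c ^ 2 + d ^ 2) = d ^ 2 * (a ^ 2 + b ^ 2) := by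
  rw [← sq_eq_sq₀ (mul_nonneg hb hc) (mul_nonneg hd ha)]
  constructor <;> intro h <;> linear_combination h

section NormedDivisionRing

variable {𝕜 : Type*} [NormedDivisionRing 𝕜]

theorem exists_norm_eq_one_mul_eq_of_norm_eq {x y : 𝕜} (hxy : ‖x‖ = ‖y‖) :
    ∃ h : 𝕜, ‖h‖ = 1 ∧ h * x = y := by
  rcases eq_or_ne x 0 with rfl | hx
  · have hy : y = 0 := norm_eq_zero.mp (by rw [← hxy, norm_zero])
    exact ⟨1, norm_one, by rw [hy, mul_zero]⟩
  · refine ⟨y * x⁻¹, ?_, inv_mul_cancel_right₀ hx y⟩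
    rw [norm_mul, norm_inv, ← hxy, mul_inv_cancel₀ (norm_ne_zero_iff.mpr hx)]

theorem exists_mk_eq_mk_rotate_iff (z : 𝕜 × 𝕜) {w : 𝕜 × 𝕜} (hw : w ≠ 0) :
    (∃ h : 𝕜, ‖h‖ = 1 ∧ ∃ hne : (z.1, h * z.2) ≠ (0 : 𝕜 × 𝕜),
        Projectivization.mk 𝕜 w hw = Projectivization.mk 𝕜 (z.1, h * z.2) hne)
      ↔ ∃ t : 𝕜, t * z.1 = w.1 ∧ ‖t * z.2‖ = ‖w.2‖ := by
  simp only [Projectivization.mk_eq_mk_iff']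
  constructor
  · rintro ⟨h, hh, -, t, rfl⟩
    exact ⟨t, rfl, by simp only [Prod.smul_mk, smul_eq_mul, norm_mul, hh, one_mul]⟩
  · rintro ⟨t, hfst, hsnd⟩
    have ht : t ≠ 0 := by
      rintro rfl
      rw [zero_mul] at hfst
      rw [zero_mul, norm_zero] at hsnd
      exact hw (Prod.ext hfst.symm (norm_eq_zero.mp hsnd.symm))
    have hnorm : ‖z.2‖ = ‖t⁻¹ * w.2‖ := by
      rw [norm_mul, ← hsnd, ← norm_mul, inv_mul_cancel_left₀ ht]
    obtain ⟨h, hh, hrot⟩ := exists_norm_eq_one_mul_eq_of_norm_eq hnorm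
    have hscale : t • (z.1, h * z.2) = w :=
      Prod.ext hfst (show t * (h * z.2) = w.2 by rw [hrot, mul_inv_cancel_left₀ ht])
    exact ⟨h, hh, right_ne_zero_of_smul (hscale ▸ hw), t, hscale⟩

theorem exists_mul_eq_and_norm_mul_eq_iff {z : 𝕜 × 𝕜} (hz : z ≠ 0) (w : 𝕜 × 𝕜) :
    (∃ t : 𝕜, t * z.1 = w.1 ∧ ‖t * z.2‖ = ‖w.2‖) ↔ ‖z.2‖ * ‖w.1‖ = ‖w.2‖ * ‖z.1‖ := by
  constructor
  · rintro ⟨t, hfst, hsnd⟩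
    rw [← hfst, ← hsnd, norm_mul, norm_mul]
    ring
  · intro hnorm
    rcases eq_or_ne z.1 0 with hz₁ | hz₁
    · have hz₂ : z.2 ≠ 0 := fun hz₂ => hz (Prod.ext hz₁ hz₂)
      have hw₁ : w.1 = 0 := by simpa [hz₁, hz₂] using hnorm
      exact ⟨w.2 * z.2⁻¹, by rw [hz₁, hw₁, mul_zero], by rw [inv_mul_cancel_right₀ hz₂]⟩
    · refine ⟨w.1 * z.1⁻¹, inv_mul_cancel_right₀ hz₁ w.1, ?_⟩
      calc ‖w.1 * z.1⁻¹ * z.2‖ = ‖z.2‖ * ‖w.1‖ * ‖z.1‖⁻¹ := by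
            rw [norm_mul, norm_mul, norm_inv]; ring
        _ = ‖w.2‖ := by rw [hnorm, mul_inv_cancel_right₀ (norm_ne_zero_iff.mpr hz₁)]

theorem orbit_invariant_CP1_general (z w : 𝕜 × 𝕜) (hz : z ≠ 0) (hw : w ≠ 0) :
    (∃ h : 𝕜, ‖h‖ = 1 ∧ ∃ hne : (z.1, h * z.2) ≠ (0 : 𝕜 × 𝕜),
        Projectivization.mk 𝕜 w hw = Projectivization.mk 𝕜 (z.1, h * z.2) hne)
      ↔ ‖z.2‖ ^ 2 * (‖w.1‖ ^ 2 + ‖w.2‖ ^ 2) = ‖w.2‖ ^ 2 * (‖z.1‖ ^ 2 + ‖z.2‖ ^ 2) := by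
  rw [exists_mk_eq_mk_rotate_iff z hw, exists_mul_eq_and_norm_mul_eq_iff hz w]
  exact mul_eq_mul_iff_sq_mul_add_sq_eq (norm_nonneg _) (norm_nonneg _) (norm_nonneg _)
    (norm_nonneg _)

end NormedDivisionRing

/-- For nonzero `z = (z₀, z₁)` and `w = (w₀, w₁)` in `ℂ²`, there is
`h ∈ S¹` with `[w₀ : w₁] = [z₀ : h z₁]` iff
`|z₁|²(|w₀|² + |w₁|²) = |w₁|²(|z₀|² + |z₁|²)`. -/
theorem orbit_invariant_CP1 (z w : ℂ × ℂ) (hz : z ≠ 0) (hw : w ≠ 0) :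
    (∃ h : ℂ, ‖h‖ = 1 ∧ ∃ hne : (z.1, h * z.2) ≠ (0 : ℂ × ℂ),
        Projectivization.mk ℂ w hw = Projectivization.mk ℂ (z.1, h * z.2) hne)
    ↔ ‖z.2‖ ^ 2 * (‖w.1‖ ^ 2 + ‖w.2‖ ^ 2)
        = ‖w.2‖ ^ 2 * (‖z.1‖ ^ 2 + ‖z.2‖ ^ 2) :=
  orbit_invariant_CP1_general z w hz hw
end
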